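/- Suppose that for every λ in an index set Λ with 2 ≤ |Λ| ≤ ω, H(λ) is a π-tree on a topological space X_λ. Suppose also that for each finite nonempty I ⊆ Λ, whenever R_i ∈ Rise_{H(i)}(X_i) for all i ∈ I, the intersection ⋂_{i∈I} R_i is infinite. Then the product space ∏_{λ∈Λ} X_λ has a π-tree. -/

import Mathlib

open Set

universe u v

/-- A family `γ` π-refines `δ`: every nonempty member of `δ` contains a
nonempty member of `γ`. -/
def PiRefines {α : Type*} (γ δ : Set (Set α)) : Prop :=
  ∀ D ∈ δ, D.Nonempty → ∃ G ∈ γ, G.Nonempty ∧ G ⊆ D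

/-- The finite intersection property. -/
def HasFIP {α : Type*} (γ : Set (Set α)) : Prop :=
  ∀ δ : Set (Set α), δ ⊆ γ → δ.Finite → δ.Nonempty → (⋂₀ δ).Nonempty

/-- `cofin A` is the family of complements in `A` of finite subsets of `A`. -/
def cofin (A : Set ℕ) : Set (Set ℕ) :=
  {B | ∃ C : Set ℕ, C.Finite ∧ C ⊆ A ∧ B = A \ C}

/-- A foliage tree on `X`: a set-theoretic tree (strict partial order with
well-ordered sets of strict predecessors) with a leaf (a subset of `X`)
attached to each node. -/
structure FoliageTree (X : Type u) where
  Node : Type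
  lt : Node → Node → Prop
  lt_irrefl : ∀ a, ¬ lt a a
  lt_trans : ∀ {a b c}, lt a b → lt b c → lt a c
  wellOrdered : ∀ a : Node, IsWellOrder {b : Node // lt b a} fun x y => lt x.1 y.1
  leaf : Node → Set X

/-- Strict proper-extension order on finite sequences of naturals. -/
def seqLT (a b : List ℕ) : Prop := a <+: b ∧ a ≠ b

namespace FoliageTree

variable {X : Type u}

/-- The sons (immediate successors) of a node. -/
def Sons (F : FoliageTree X) (x : F.Node) : Set F.Node :=
  {s | F.lt x s ∧ ¬ ∃ t, F.lt x t ∧ F.lt t s}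

/-- A node is maximal if it has no strict successor. -/
def IsMaxNode (F : FoliageTree X) (x : F.Node) : Prop := ¬ ∃ s, F.lt x s

/-- A chain of nodes. -/
def IsChainN (F : FoliageTree X) (C : Set F.Node) : Prop :=
  ∀ x ∈ C, ∀ y ∈ C, F.lt x y ∨ x = y ∨ F.lt y x

/-- A branch is a maximal chain. -/
def IsBranch (F : FoliageTree X) (B : Set F.Node) : Prop :=
  F.IsChainN B ∧ ∀ C, F.IsChainN C → B ⊆ C → B = C

/-- The height of a node: the order type of its set of strict predecessors. -/
noncomputable def height (F : FoliageTree X) (v : F.Node) : Ordinal :=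
  @Ordinal.type {b : F.Node // F.lt b v} (fun x y => F.lt x.1 y.1) (F.wellOrdered v)

/-- `shoot F v`: unions of leaves over cofinite sets of sons of `v`. -/
def shoot (F : FoliageTree X) (v : F.Node) : Set (Set X) :=
  {S | ∃ C : Set F.Node, C ⊆ F.Sons v ∧ (F.Sons v \ C).Finite ∧ S = ⋃ s ∈ C, F.leaf s}

/-- `scope F p`: the nodes whose leaf contains `p`. -/
def scope (F : FoliageTree X) (p : X) : Set F.Node := {x | p ∈ F.leaf x}

/-- The union of all leaves. -/
def flesh (F : FoliageTree X) : Set X := ⋃ x, F.leaf x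

/-- `F` is a foliage `ω,ω`-tree: its skeleton is order-isomorphic to
`(ω^{<ω}, ⊂)`. -/
def IsOmegaOmegaTree (F : FoliageTree X) : Prop := Nonempty (F.lt ≃r seqLT)

/-- `F` is locally strict: the leaf of every non-maximal node is the disjoint
union of the leaves of its sons. -/
def LocallyStrict (F : FoliageTree X) : Prop :=
  ∀ x, ¬ F.IsMaxNode x →
    F.leaf x = (⋃ s ∈ F.Sons x, F.leaf s) ∧
      ∀ s ∈ F.Sons x, ∀ t ∈ F.Sons x, s ≠ t → Disjoint (F.leaf s) (F.leaf t)

/-- `F` has strict branches: it has nodes, and along every branch the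
intersection of the leaves is a singleton. -/
def StrictBranches (F : FoliageTree X) : Prop :=
  Nonempty F.Node ∧ ∀ B, F.IsBranch B → ∃ p, (⋂ x ∈ B, F.leaf x) = {p}

/-- `r` is the root: the least node. -/
def IsRoot (F : FoliageTree X) (r : F.Node) : Prop := ∀ x, r = x ∨ F.lt r x

/-- All leaves are open. -/
def OpenIn [TopologicalSpace X] (F : FoliageTree X) : Prop := ∀ x, IsOpen (F.leaf x)

/-- `F` is a Baire foliage tree on `X`. -/
def IsBaireFoliageTree [TopologicalSpace X] (F : FoliageTree X) : Prop :=
  F.OpenIn ∧ F.LocallyStrict ∧ F.IsOmegaOmegaTree ∧ F.StrictBranches ∧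
    ∃ r, F.IsRoot r ∧ F.leaf r = Set.univ

/-- `F` grows into `X`. -/
def GrowsInto [TopologicalSpace X] (F : FoliageTree X) : Prop :=
  ∀ p : X, ∀ U ∈ nhds p, ∃ z ∈ F.scope p, PiRefines (F.shoot z) {U}

/-- `F` is a π-tree on `X`. -/
def IsPiTree [TopologicalSpace X] (F : FoliageTree X) : Prop :=
  F.IsBaireFoliageTree ∧ F.GrowsInto

/-- `rise F p U`: the set of (finite) heights of nodes `v` whose leaf contains
`p` and whose shoot π-refines `{U}`. -/
noncomputable def rise (F : FoliageTree X) (p : X) (U : Set X) : Set ℕ :=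
  {n | ∃ v ∈ F.scope p, PiRefines (F.shoot v) {U} ∧ F.height v = (n : Ordinal)}

/-- `Rise F`: all sets `rise F p U` for `p ∈ X` and `U` a neighbourhood of `p`. -/
def Rise [TopologicalSpace X] (F : FoliageTree X) : Set (Set ℕ) :=
  {R | ∃ p U, U ∈ nhds p ∧ R = F.rise p U}

end FoliageTree

/-! A chart is a bijection `φ : X → ω^ω` matching the leaves of a foliage `ω,ω`-tree with the basic
cylinders of the Baire space, so a Baire foliage tree is the same thing as a continuous chart.
In a chart, `n ∈ rise p U` says that `U` contains the preimage of some fan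
`{y | y ↾ n = φ p ↾ n ∧ m ≤ y n}`.

It remains to merge countably many sequences `x l ∈ ω^ω` into one so that fans are respected.
Enumerate `Λ` injectively by `c : Λ → ω`, using the number `0`, and put the coordinate `x l k` into
the block number `max (c l) k`. Each block is finite and nonempty, and is encoded by a pair of
numbers the first of which is a lower bound for all the entries of the block; these pairs, written
one after another, form the merged sequence. If two merged sequences agree below `2 * n`, then their
blocks below `n` agree, and if moreover the entry at `2 * n` is at least `m`, so are all the entries
of block `n`, in particular `x l n` whenever `c l ≤ n`.
-/

section FiniteSequences

/-- The initial segment `x ↾ n` of a sequence, as a node of the tree of finite sequences. -/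
def initSeg {α : Type*} (x : ℕ → α) (n : ℕ) : List α := (List.range n).map x

variable {α : Type*}

@[simp]
lemma length_initSeg (x : ℕ → α) (n : ℕ) : (initSeg x n).length = n := by simp [initSeg]

lemma initSeg_succ (x : ℕ → α) (n : ℕ) : initSeg x (n + 1) = initSeg x n ++ [x n] := by
  simp [initSeg, List.range_succ]

lemma initSeg_eq_initSeg_iff {x y : ℕ → α} {n : ℕ} :
    initSeg y n = initSeg x n ↔ y ∈ PiNat.cylinder x n := by
  simp [initSeg, PiNat.mem_cylinder_iff]

lemma initSeg_prefix_initSeg (x : ℕ → α) {m n : ℕ} (h : m ≤ n) : initSeg x m <+: initSeg x n :=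
  List.prefix_iff_eq_take.2 (by simp [initSeg, ← List.map_take, h])

lemma initSeg_length_eq_iff {x : ℕ → α} {s : List α} :
    initSeg x s.length = s ↔ ∀ (i : ℕ) (hi : i < s.length), x i = s[i] := by
  simp [List.ext_getElem_iff, initSeg]

lemma initSeg_length_append_singleton {x : ℕ → α} {s : List α} {a : α} :
    initSeg x (s ++ [a]).length = s ++ [a] ↔ initSeg x s.length = s ∧ x s.length = a := by
  rw [List.length_append, List.length_singleton, initSeg_succ, List.append_singleton_inj]

lemma seqLT_iff {s t : List ℕ} : seqLT s t ↔ s <+: t ∧ s.length < t.length :=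
  and_congr_right fun h => by
    rw [h.length_le.lt_iff_ne, ne_eq, ne_eq, not_congr ⟨congrArg _, h.eq_of_length⟩]

lemma seqLT.length_lt {s t : List ℕ} (h : seqLT s t) : s.length < t.length :=
  (seqLT_iff.1 h).2

lemma seqLT.trans {r s t : List ℕ} (hrs : seqLT r s) (hst : seqLT s t) : seqLT r t :=
  seqLT_iff.2 ⟨hrs.1.trans hst.1, hrs.length_lt.trans hst.length_lt⟩

lemma seqLT_append_singleton (s : List ℕ) (i : ℕ) : seqLT s (s ++ [i]) :=
  seqLT_iff.2 ⟨List.prefix_append _ _, by simp⟩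

lemma seqLT_nil_iff {s : List ℕ} : seqLT [] s ↔ [] ≠ s :=
  and_iff_right ⟨s, rfl⟩

lemma seqLT.exists_append_singleton_isPrefix {s t : List ℕ} (h : seqLT s t) :
    ∃ i, s ++ [i] <+: t := by
  obtain ⟨⟨_ | ⟨i, u⟩, rfl⟩, hne⟩ := h
  · simp at hne
  · exact ⟨i, u, by simp⟩

lemma isImmediateSucc_seqLT_iff {s t : List ℕ} :
    (seqLT s t ∧ ¬ ∃ r, seqLT s r ∧ seqLT r t) ↔ ∃ i, t = s ++ [i] := by
  constructor
  · rintro ⟨hst, hnone⟩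
    obtain ⟨i, hi⟩ := hst.exists_append_singleton_isPrefix
    by_contra! hne
    exact hnone ⟨s ++ [i], seqLT_append_singleton s i, hi, (hne i).symm⟩
  · rintro ⟨i, rfl⟩
    refine ⟨seqLT_append_singleton s i, fun ⟨r, hsr, hri⟩ => ?_⟩
    have hlt := hri.length_lt
    rw [List.length_append, List.length_singleton] at hlt
    exact absurd hsr.length_lt (by lia)

/-- The predecessors of a finite sequence, ordered by extension, are listed by their lengths. -/
def seqPredIso (s : List ℕ) :
    (fun r t : {r : List ℕ // seqLT r s} => seqLT r.1 t.1) ≃r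
      ((· < ·) : Fin s.length → Fin s.length → Prop) where
  toFun r := ⟨r.1.length, r.2.length_lt⟩
  invFun k := ⟨s.take k, seqLT_iff.2 ⟨⟨_, s.take_append_drop k⟩, by simp⟩⟩
  left_inv r := Subtype.ext (List.prefix_iff_eq_take.1 r.2.1).symm
  right_inv k := Fin.ext (by simp [k.2.le])
  map_rel_iff' {r t} :=
    ⟨fun h => seqLT_iff.2 ⟨List.prefix_of_prefix_length_le r.2.1 t.2.1 (le_of_lt h), h⟩,
      seqLT.length_lt⟩

lemma prefix_of_isChain_of_length_le {B : Set (List ℕ)} (hB : IsChain seqLT B) {s t : List ℕ}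
    (hs : s ∈ B) (ht : t ∈ B) (h : s.length ≤ t.length) : s <+: t := by
  obtain rfl | hne := eq_or_ne s t
  · exact List.prefix_rfl
  · exact (hB hs ht hne).elim And.left fun hts => absurd hts.length_lt h.not_gt

lemma isChain_range_initSeg (x : ℕ → ℕ) : IsChain seqLT (range (initSeg x)) := by
  rintro _ ⟨m, rfl⟩ _ ⟨n, rfl⟩ hne
  rcases le_total m n with h | h
  · exact Or.inl ⟨initSeg_prefix_initSeg x h, hne⟩
  · exact Or.inr ⟨initSeg_prefix_initSeg x h, hne.symm⟩

lemma exists_subset_range_initSeg_of_isChain {B : Set (List ℕ)} (hB : IsChain seqLT B) :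
    ∃ x : ℕ → ℕ, B ⊆ range (initSeg x) := by
  have hentry : ∀ i, ∃ a, ∀ s ∈ B, ∀ hi : i < s.length, a = s[i] := by
    intro i
    by_cases hlong : ∃ t ∈ B, i < t.length
    · obtain ⟨t, ht, hit⟩ := hlong
      refine ⟨t[i], fun s hs his => ?_⟩
      rcases le_total s.length t.length with h | h
      · exact ((prefix_of_isChain_of_length_le hB hs ht h).getElem his).symm
      · exact (prefix_of_isChain_of_length_le hB ht hs h).getElem hit
    · exact ⟨0, fun s hs his => absurd ⟨s, hs, his⟩ hlong⟩
  choose x hx using hentry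
  exact ⟨x, fun s hs => ⟨s.length, initSeg_length_eq_iff.2 fun i => hx i s hs⟩⟩

lemma isMaxChain_seqLT_iff {B : Set (List ℕ)} :
    IsMaxChain seqLT B ↔ ∃ x : ℕ → ℕ, B = range (initSeg x) := by
  constructor
  · rintro ⟨hB, hmax⟩
    obtain ⟨x, hx⟩ := exists_subset_range_initSeg_of_isChain hB
    exact ⟨x, hmax (isChain_range_initSeg x) hx⟩
  · rintro ⟨x, rfl⟩
    refine ⟨isChain_range_initSeg x, fun C hC hsub => hsub.antisymm fun s hs => ?_⟩
    have hpre := prefix_of_isChain_of_length_le hC (hsub ⟨s.length, rfl⟩) hs (length_initSeg _ _).le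
    exact ⟨s.length, hpre.eq_of_length (length_initSeg _ _)⟩

end FiniteSequences

section Fans

/-- The fan at `x ↾ n` with threshold `m`: the sequences that extend `x ↾ n` by an entry `≥ m`.
The fans at `x ↾ n` are cofinal among the members of the shoot of `x ↾ n` in the tree of basic
cylinders of the Baire space. -/
def fan (x : ℕ → ℕ) (n m : ℕ) : Set (ℕ → ℕ) := {y ∈ PiNat.cylinder x n | m ≤ y n}

lemma fan_nonempty (x : ℕ → ℕ) (n m : ℕ) : (fan x n m).Nonempty :=
  ⟨Function.update x n m, PiNat.update_mem_cylinder x n m, by simp⟩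

lemma fan_anti (x : ℕ → ℕ) (n : ℕ) {m m' : ℕ} (h : m ≤ m') : fan x n m' ⊆ fan x n m :=
  fun _ hy => ⟨hy.1, h.trans hy.2⟩

/-- The description of `FoliageTree.rise` in terms of coordinates `φ : X → ω^ω`. -/
def fanRise {X : Type*} (φ : X → ℕ → ℕ) (p : X) (U : Set X) : Set ℕ :=
  {n | ∃ m, φ ⁻¹' fan (φ p) n m ⊆ U}

end Fans

namespace FoliageTree

section Skeleton

variable {X : Type u} {F : FoliageTree X}

lemma isBranch_iff_isMaxChain {B : Set F.Node} : F.IsBranch B ↔ IsMaxChain F.lt B := by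
  have hchain : ∀ C : Set F.Node, F.IsChainN C ↔ IsChain F.lt C := fun C =>
    forall₄_congr fun x _ y _ => by tauto
  simp only [IsBranch, IsMaxChain, hchain]

variable (e : F.lt ≃r seqLT)

include e

lemma isBranch_iff {B : Set F.Node} :
    F.IsBranch B ↔ ∃ x : ℕ → ℕ, B = range fun n => e.symm (initSeg x n) := by
  have himage : F.IsBranch B ↔ IsMaxChain seqLT (e '' B) :=
    isBranch_iff_isMaxChain.trans
      ⟨.image e, fun h => by simpa [image_image] using h.image e.symm⟩
  rw [himage, isMaxChain_seqLT_iff]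
  refine exists_congr fun x => ?_
  rw [show (fun n => e.symm (initSeg x n)) = e.symm ∘ initSeg x from rfl, range_comp]
  exact ⟨fun h => by simp [← h, image_image], fun h => by simp [h, image_image]⟩

lemma mem_sons_iff {v w : F.Node} : w ∈ F.Sons v ↔ ∃ i, w = e.symm (e v ++ [i]) := by
  have himage : w ∈ F.Sons v ↔ seqLT (e v) (e w) ∧ ¬ ∃ r, seqLT (e v) r ∧ seqLT r (e w) := by
    simp only [e.surjective.exists, e.map_rel_iff]
    rfl
  rw [himage, isImmediateSucc_seqLT_iff]
  exact exists_congr fun i => e.toEquiv.eq_symm_apply.symm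

lemma not_isMaxNode (v : F.Node) : ¬ F.IsMaxNode v :=
  not_not.2 ⟨_, ((mem_sons_iff e).2 ⟨0, rfl⟩).1⟩

lemma isRoot_symm_nil : F.IsRoot (e.symm []) := fun v => by
  rw [← e.map_rel_iff, e.apply_symm_apply, seqLT_nil_iff]
  exact (em _).imp_left e.toEquiv.symm_apply_eq.2

lemma IsRoot.eq_symm_nil {r : F.Node} (hr : F.IsRoot r) : r = e.symm [] :=
  (hr _).resolve_right fun h => (isRoot_symm_nil e r).elim
    (fun heq => F.lt_irrefl _ (heq ▸ h)) fun h' => F.lt_irrefl _ (F.lt_trans h h')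

lemma height_eq_length (v : F.Node) : F.height v = ((e v).length : Ordinal) := by
  let predIso : (fun a b : {w : F.Node // F.lt w v} => F.lt a.1 b.1) ≃r
      (fun s t : {s : List ℕ // seqLT s (e v)} => seqLT s.1 t.1) :=
    { toEquiv := e.toEquiv.subtypeEquiv fun _ => e.map_rel_iff.symm
      map_rel_iff' := e.map_rel_iff }
  have := F.wellOrdered v
  rw [← Ordinal.type_fin]
  exact Ordinal.type_eq.2 ⟨predIso.trans (seqPredIso (e v))⟩

lemma leaf_eq_iUnion_leaf_sons (hF : F.LocallyStrict) (v : F.Node) :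
    F.leaf v = ⋃ i, F.leaf (e.symm (e v ++ [i])) := by
  rw [(hF v (not_isMaxNode e v)).1]
  ext p
  simp [mem_sons_iff e]

lemma eq_of_mem_leaf_sons (hF : F.LocallyStrict) {v : F.Node} {p : X} {i j : ℕ}
    (hi : p ∈ F.leaf (e.symm (e v ++ [i]))) (hj : p ∈ F.leaf (e.symm (e v ++ [j]))) : i = j := by
  by_contra hne
  have hdisj := (hF v (not_isMaxNode e v)).2 _ ((mem_sons_iff e).2 ⟨i, rfl⟩) _
    ((mem_sons_iff e).2 ⟨j, rfl⟩) (by simpa using hne)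
  exact disjoint_left.1 hdisj hi hj

lemma exists_forall_mem_leaf_initSeg (hF : F.LocallyStrict) {p : X}
    (hp : p ∈ F.leaf (e.symm [])) : ∃ x : ℕ → ℕ, ∀ n, p ∈ F.leaf (e.symm (initSeg x n)) := by
  have hnext : ∀ s, p ∈ F.leaf (e.symm s) → ∃ i, p ∈ F.leaf (e.symm (s ++ [i])) := by
    intro s hs
    rwa [leaf_eq_iUnion_leaf_sons e hF, mem_iUnion, e.apply_symm_apply] at hs
  choose! next hnext using hnext
  let node : ℕ → List ℕ := fun n => Nat.rec [] (fun _ s => s ++ [next s]) n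
  have hnode : ∀ n, initSeg (fun k => next (node k)) n = node n := by
    intro n
    induction n with
    | zero => rfl
    | succ n ih => rw [initSeg_succ, ih]
  refine ⟨fun k => next (node k), fun n => ?_⟩
  rw [hnode]
  induction n with
  | zero => exact hp
  | succ n ih => exact hnext _ ih

lemma initSeg_length_eq_of_mem_leaf (hF : F.LocallyStrict) {p : X} {x : ℕ → ℕ}
    (hx : ∀ n, p ∈ F.leaf (e.symm (initSeg x n))) {s : List ℕ} (hs : p ∈ F.leaf (e.symm s)) :
    initSeg x s.length = s := by
  induction s using List.reverseRecOn with
  | nil => rfl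
  | append_singleton s i ih =>
    have hsons := leaf_eq_iUnion_leaf_sons e hF (e.symm s)
    rw [e.apply_symm_apply] at hsons
    have hinit : initSeg x s.length = s := ih (hsons ▸ mem_iUnion_of_mem i hs)
    have hsucc := hx (s.length + 1)
    rw [initSeg_succ, hinit] at hsucc
    exact initSeg_length_append_singleton.2
      ⟨hinit, eq_of_mem_leaf_sons e hF (v := e.symm s) (by simpa using hsucc) (by simpa using hs)⟩

end Skeleton

section Charts

variable {X : Type u} {F : FoliageTree X} {e : F.lt ≃r seqLT} {φ : X → ℕ → ℕ}

/-- Coordinates for a foliage `ω,ω`-tree: `φ` identifies `X` with the Baire space in such a way that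
the leaf of `v` consists of the points whose coordinates extend the finite sequence `e v`. -/
structure IsChart (F : FoliageTree X) (e : F.lt ≃r seqLT) (φ : X → ℕ → ℕ) : Prop where
  bijective : Function.Bijective φ
  mem_leaf_iff : ∀ {p v}, p ∈ F.leaf v ↔ initSeg (φ p) (e v).length = e v

namespace IsChart

lemma mem_leaf_initSeg_iff (h : F.IsChart e φ) {p : X} {x : ℕ → ℕ} {n : ℕ} :
    p ∈ F.leaf (e.symm (initSeg x n)) ↔ φ p ∈ PiNat.cylinder x n := by
  rw [h.mem_leaf_iff, e.apply_symm_apply, length_initSeg, initSeg_eq_initSeg_iff]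

lemma mem_leaf_son_iff (h : F.IsChart e φ) {p : X} {v : F.Node} {i : ℕ} :
    p ∈ F.leaf (e.symm (e v ++ [i])) ↔ p ∈ F.leaf v ∧ φ p (e v).length = i := by
  rw [h.mem_leaf_iff, h.mem_leaf_iff, e.apply_symm_apply, initSeg_length_append_singleton]

lemma leaf_eq_preimage_cylinder (h : F.IsChart e φ) {p : X} {v : F.Node} (hp : p ∈ F.leaf v) :
    F.leaf v = φ ⁻¹' PiNat.cylinder (φ p) (e v).length := by
  ext q
  rw [mem_preimage, ← h.mem_leaf_initSeg_iff, h.mem_leaf_iff.1 hp, e.symm_apply_apply]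

lemma continuous_iff_openIn [TopologicalSpace X] (h : F.IsChart e φ) :
    Continuous φ ↔ F.OpenIn := by
  constructor
  · intro hφ v
    obtain hempty | ⟨p, hp⟩ := (F.leaf v).eq_empty_or_nonempty
    · rw [hempty]
      exact isOpen_empty
    · rw [h.leaf_eq_preimage_cylinder hp]
      exact (PiNat.isOpen_cylinder _ _ _).preimage hφ
  · intro hF
    refine (PiNat.isTopologicalBasis_cylinders _).continuous_iff.2 ?_
    rintro _ ⟨x, n, rfl⟩
    convert hF (e.symm (initSeg x n)) using 1
    ext p
    exact h.mem_leaf_initSeg_iff.symm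

lemma locallyStrict (h : F.IsChart e φ) : F.LocallyStrict := by
  intro v _
  constructor
  · ext p
    simp [mem_sons_iff e, h.mem_leaf_son_iff]
  · intro s hs t ht hst
    obtain ⟨i, rfl⟩ := (mem_sons_iff e).1 hs
    obtain ⟨j, rfl⟩ := (mem_sons_iff e).1 ht
    refine disjoint_left.2 fun p hi hj => hst ?_
    rw [← (h.mem_leaf_son_iff.1 hi).2, ← (h.mem_leaf_son_iff.1 hj).2]

lemma strictBranches (h : F.IsChart e φ) : F.StrictBranches := by
  refine ⟨⟨e.symm []⟩, fun B hB => ?_⟩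
  obtain ⟨x, rfl⟩ := (isBranch_iff e).1 hB
  obtain ⟨p, rfl⟩ := h.bijective.2 x
  refine ⟨p, ext fun q => ?_⟩
  simp only [mem_iInter, forall_mem_range, h.mem_leaf_initSeg_iff, mem_singleton_iff]
  refine ⟨fun hq => h.bijective.1 (funext fun k => hq (k + 1) k k.lt_succ_self), ?_⟩
  rintro rfl n
  exact PiNat.self_mem_cylinder _ _

lemma isBaireFoliageTree [TopologicalSpace X] (h : F.IsChart e φ) (hφ : Continuous φ) :
    F.IsBaireFoliageTree := by
  refine ⟨h.continuous_iff_openIn.1 hφ, h.locallyStrict, ⟨e⟩, h.strictBranches, e.symm [],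
    isRoot_symm_nil e, eq_univ_of_forall fun p => ?_⟩
  rw [h.mem_leaf_iff, e.apply_symm_apply]
  rfl

lemma preimage_fan (h : F.IsChart e φ) {p : X} {v : F.Node} (hp : p ∈ F.leaf v) (m : ℕ) :
    φ ⁻¹' fan (φ p) (e v).length m = ⋃ i ≥ m, F.leaf (e.symm (e v ++ [i])) := by
  ext q
  have hcyl : φ q ∈ PiNat.cylinder (φ p) (e v).length ↔ q ∈ F.leaf v := by
    rw [h.leaf_eq_preimage_cylinder hp, mem_preimage]
  rw [mem_iUnion₂]
  constructor
  · rintro ⟨hq, hm⟩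
    exact ⟨_, hm, h.mem_leaf_son_iff.2 ⟨hcyl.1 hq, rfl⟩⟩
  · rintro ⟨i, hm, hq⟩
    obtain ⟨hqv, rfl⟩ := h.mem_leaf_son_iff.1 hq
    exact ⟨hcyl.2 hqv, hm⟩

lemma piRefines_shoot_iff (h : F.IsChart e φ) {p : X} {v : F.Node} (hp : p ∈ F.leaf v)
    {U : Set X} (hU : U.Nonempty) :
    PiRefines (F.shoot v) {U} ↔ ∃ m, φ ⁻¹' fan (φ p) (e v).length m ⊆ U := by
  have hinj : Function.Injective fun i => e.symm (e v ++ [i]) := fun i j hij => by simpa using hij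
  simp only [h.preimage_fan hp]
  constructor
  · intro href
    obtain ⟨_, ⟨C, -, hfin, rfl⟩, -, hCU⟩ := href U rfl hU
    obtain ⟨m, hm⟩ := (hfin.preimage hinj.injOn).bddAbove
    refine ⟨m + 1, (iUnion₂_subset fun i hi => ?_).trans hCU⟩
    refine subset_biUnion_of_mem (u := F.leaf) (by_contra fun hC => ?_)
    exact (Nat.lt_of_succ_le hi).not_ge (hm ⟨(mem_sons_iff e).2 ⟨i, rfl⟩, hC⟩)
  · rintro ⟨m, hm⟩ _ rfl -
    refine ⟨_, ⟨(fun i => e.symm (e v ++ [i])) '' Ici m, ?_, ?_, rfl⟩, ?_, ?_⟩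
    · rintro _ ⟨i, -, rfl⟩
      exact (mem_sons_iff e).2 ⟨i, rfl⟩
    · refine ((finite_Iio m).image fun i => e.symm (e v ++ [i])).subset ?_
      rintro w ⟨hw, hwm⟩
      obtain ⟨i, rfl⟩ := (mem_sons_iff e).1 hw
      exact ⟨i, mem_Iio.2 (not_le.1 fun hi => hwm ⟨i, hi, rfl⟩), rfl⟩
    · rw [biUnion_image]
      exact h.preimage_fan hp m ▸ (fan_nonempty _ _ m).preimage h.bijective.2
    · rwa [biUnion_image]

lemma rise_eq_fanRise (h : F.IsChart e φ) {p : X} {U : Set X} (hp : p ∈ U) :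
    F.rise p U = fanRise φ p U := by
  ext n
  constructor
  · rintro ⟨v, hv, href, hheight⟩
    have hn : (e v).length = n := by
      rw [height_eq_length e] at hheight
      exact_mod_cast hheight
    exact hn ▸ (h.piRefines_shoot_iff hv ⟨p, hp⟩).1 href
  · intro hn
    have hv : p ∈ F.leaf (e.symm (initSeg (φ p) n)) :=
      h.mem_leaf_initSeg_iff.2 (PiNat.self_mem_cylinder _ _)
    refine ⟨_, hv, (h.piRefines_shoot_iff hv ⟨p, hp⟩).2 ?_, ?_⟩
    · simpa [fanRise] using hn
    · simp [height_eq_length e]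

lemma growsInto [TopologicalSpace X] (h : F.IsChart e φ)
    (hrise : ∀ p, ∀ U ∈ nhds p, (fanRise φ p U).Nonempty) : F.GrowsInto := by
  intro p U hU
  obtain ⟨n, hn⟩ := hrise p U hU
  rw [← h.rise_eq_fanRise (mem_of_mem_nhds hU)] at hn
  obtain ⟨v, hv, href, -⟩ := hn
  exact ⟨v, hv, href⟩

end IsChart

lemma IsBaireFoliageTree.exists_isChart [TopologicalSpace X] (hF : F.IsBaireFoliageTree) :
    ∃ (e : F.lt ≃r seqLT) (φ : X → ℕ → ℕ), F.IsChart e φ ∧ Continuous φ := by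
  obtain ⟨hopen, hstrict, ⟨e⟩, ⟨-, hbranch⟩, r, hr, hleaf⟩ := hF
  rw [hr.eq_symm_nil e] at hleaf
  choose φ hφ using fun p => exists_forall_mem_leaf_initSeg e hstrict (p := p) (by simp [hleaf])
  have hinit : ∀ {p s}, p ∈ F.leaf (e.symm s) → initSeg (φ p) s.length = s := fun {p _} hs =>
    initSeg_length_eq_of_mem_leaf e hstrict (hφ p) hs
  have hpoint : ∀ x : ℕ → ℕ, ∃ p, ∀ q, (∀ n, q ∈ F.leaf (e.symm (initSeg x n))) ↔ q = p := by
    intro x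
    obtain ⟨p, hp⟩ := hbranch _ ((isBranch_iff e).2 ⟨x, rfl⟩)
    exact ⟨p, fun q => by simpa using Set.ext_iff.1 hp q⟩
  have hchart : F.IsChart e φ :=
    { bijective := by
        constructor
        · intro p q hpq
          obtain ⟨r, hr⟩ := hpoint (φ p)
          rw [(hr p).1 (hφ p), (hr q).1 (hpq ▸ hφ q)]
        · intro x
          obtain ⟨p, hp⟩ := hpoint x
          refine ⟨p, funext fun k => ?_⟩
          have hk := hinit ((hp p).2 rfl (k + 1))
          rw [length_initSeg, initSeg_eq_initSeg_iff] at hk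
          exact hk k k.lt_succ_self
      mem_leaf_iff := fun {p v} => by
        refine ⟨fun hv => hinit (by simpa using hv), fun hv => ?_⟩
        simpa [hv] using hφ p (e v).length }
  exact ⟨e, φ, hchart, hchart.continuous_iff_openIn.2 hopen⟩

/-- The foliage tree on `X` obtained by pulling back the basic cylinders of the Baire space. -/
def ofCoords (φ : X → ℕ → ℕ) : FoliageTree X where
  Node := List ℕ
  lt := seqLT
  lt_irrefl _ h := h.2 rfl
  lt_trans := seqLT.trans
  wellOrdered s := (seqPredIso s).toRelEmbedding.isWellOrder
  leaf s := {p | initSeg (φ p) s.length = s}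

lemma isChart_ofCoords (hφ : Function.Bijective φ) :
    (ofCoords φ).IsChart (RelIso.refl seqLT) φ :=
  ⟨hφ, Iff.rfl⟩

end Charts

end FoliageTree

section Merging

open Filter

/-- The sequence whose entries at `2 * n` and `2 * n + 1` are the components of the `n`-th pair. -/
def interleave (α : Type*) [TopologicalSpace α] : (ℕ → α × α) ≃ₜ (ℕ → α) where
  toFun z := Sum.elim (fun n => (z n).1) (fun n => (z n).2) ∘ Equiv.natSumNatEquivNat.symm
  invFun y n := (y (2 * n), y (2 * n + 1))
  left_inv z := by
    have heven : ∀ n, Equiv.natSumNatEquivNat.symm (2 * n) = .inl n := fun n =>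
      (Equiv.symm_apply_eq _).2 (by simp)
    have hodd : ∀ n, Equiv.natSumNatEquivNat.symm (2 * n + 1) = .inr n := fun n =>
      (Equiv.symm_apply_eq _).2 (by simp)
    simp [heven, hodd]
  right_inv y := by
    funext k
    obtain ⟨i, rfl⟩ := Equiv.natSumNatEquivNat.surjective k
    cases i <;> simp
  continuous_toFun := by
    refine continuous_pi fun k => ?_
    obtain ⟨i, rfl⟩ := Equiv.natSumNatEquivNat.surjective k
    cases i <;> simp only [Function.comp_apply, Equiv.symm_apply_apply, Sum.elim_inl, Sum.elim_inr]
      <;> fun_prop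
  continuous_invFun := by fun_prop

lemma interleave_two_mul {α : Type*} [TopologicalSpace α] (z : ℕ → α × α) (n : ℕ) :
    interleave α z (2 * n) = (z n).1 :=
  congrArg Prod.fst (congrFun ((interleave α).symm_apply_apply z) n)

lemma mem_cylinder_of_interleave_mem_cylinder {α : Type*} [TopologicalSpace α]
    {z w : ℕ → α × α} {n : ℕ} (h : interleave α w ∈ PiNat.cylinder (interleave α z) (2 * n)) :
    w ∈ PiNat.cylinder z n := by
  intro k hk
  rw [← (interleave α).symm_apply_apply w, ← (interleave α).symm_apply_apply z]
  exact Prod.ext (h _ (by lia)) (h _ (by lia))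

/-- Regrouping the coordinates of a family of sequences according to their values under `b`. -/
def regroup {Λ ι κ : Type*} (α : Type*) [TopologicalSpace α] (b : Λ × κ → ι) :
    (Λ → κ → α) ≃ₜ (∀ i, {j // b j = i} → α) where
  toFun x _ j := x j.1.1 j.1.2
  invFun y l k := y (b (l, k)) ⟨(l, k), rfl⟩
  left_inv _ := rfl
  right_inv y := by
    funext i ⟨j, hj⟩
    subst hj
    rfl
  continuous_toFun := by fun_prop
  continuous_invFun := by fun_prop

lemma exists_equiv_nat_prod_nat_fst_le (J : Type*) [Finite J] [Nonempty J] :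
    ∃ E : (J → ℕ) ≃ ℕ × ℕ, ∀ f j, (E f).1 ≤ f j := by
  let bound : (J → ℕ) → ℕ := fun f => (Nat.unpair (⨅ j, f j)).1
  have hbound : ∀ f j, bound f ≤ f j := fun f j =>
    (Nat.unpair_left_le _).trans (ciInf_le (OrderBot.bddBelow _) j)
  have hfiber : ∀ k, Infinite {f // bound f = k} := fun k =>
    Infinite.of_injective (fun t : ℕ => ⟨fun _ => Nat.pair k t, by simp [bound]⟩) fun t t' h => by
      simpa using congrFun (congrArg Subtype.val h) (Classical.arbitrary J)
  let fiberEquiv : ∀ k, {f // bound f = k} ≃ ℕ := fun k => nonempty_equiv_of_countable.some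
  exact ⟨(Equiv.sigmaFiberEquiv bound).symm.trans
    ((Equiv.sigmaCongrRight fiberEquiv).trans (Equiv.sigmaEquivProd ℕ ℕ)), hbound⟩

lemma exists_injective_nat_eq_zero (Λ : Type*) [Countable Λ] [Nonempty Λ] :
    ∃ c : Λ → ℕ, Function.Injective c ∧ ∃ a, c a = 0 := by
  obtain ⟨c, hc⟩ := exists_injective_nat Λ
  let a := Classical.arbitrary Λ
  exact ⟨Equiv.swap (c a) 0 ∘ c, (Equiv.injective _).comp hc, a, Equiv.swap_apply_left _ _⟩

theorem exists_homeomorph_preimage_fan_subset_pi (Λ : Type*) [Countable Λ] [Nonempty Λ] :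
    ∃ Ψ : (Λ → ℕ → ℕ) ≃ₜ (ℕ → ℕ), ∀ I : Finset Λ, ∀ᶠ n in atTop, ∀ x m,
      Ψ ⁻¹' fan (Ψ x) (2 * n) m ⊆ (I : Set Λ).pi fun l => fan (x l) n m := by
  obtain ⟨c, hc, a, ha⟩ := exists_injective_nat_eq_zero Λ
  let b : Λ × ℕ → ℕ := fun j => max (c j.1) j.2
  have hfin : ∀ n, Finite {j // b j = n} := fun n =>
    ((((finite_Iic n).preimage hc.injOn).prod (finite_Iic n)).subset fun _ hj =>
      ⟨(le_max_left _ _).trans_eq hj, (le_max_right _ _).trans_eq hj⟩).to_subtype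
  have hne : ∀ n, Nonempty {j // b j = n} := fun n => ⟨(a, n), by simp [b, ha]⟩
  choose E hE using fun n => exists_equiv_nat_prod_nat_fst_le {j // b j = n}
  let code := Homeomorph.piCongrRight fun n => (E n).toHomeomorphOfDiscrete
  refine ⟨(regroup ℕ b).trans (code.trans (interleave ℕ)), fun I => ?_⟩
  filter_upwards [eventually_gt_atTop (I.sup c)] with n hn x m y hy l hl
  have hcl : c l < n := (Finset.le_sup hl).trans_lt hn
  have hcode := mem_cylinder_of_interleave_mem_cylinder hy.1
  refine ⟨fun k hk => ?_, ?_⟩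
  · have hblock := (E _).injective (hcode (b (l, k)) (max_lt hcl hk))
    exact congrFun hblock ⟨(l, k), rfl⟩
  · calc m ≤ (E n (regroup ℕ b y n)).1 := hy.2.trans_eq (interleave_two_mul _ n)
      _ ≤ y l n := hE n _ ⟨(l, n), max_eq_right hcl.le⟩

lemma fanRise_pi_nonempty {Λ : Type*} {X : Λ → Type*} [∀ l, TopologicalSpace (X l)]
    {φ : ∀ l, X l → ℕ → ℕ} {Ψ : (Λ → ℕ → ℕ) → ℕ → ℕ}
    (hΨ : ∀ I : Finset Λ, ∀ᶠ n in atTop, ∀ x m,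
      Ψ ⁻¹' fan (Ψ x) (2 * n) m ⊆ (I : Set Λ).pi fun l => fan (x l) n m)
    {p : ∀ l, X l} {U : Set (∀ l, X l)} (hU : U ∈ nhds p)
    (hinf : ∀ (I : Finset Λ) (t : ∀ l, Set (X l)), (∀ l, t l ∈ nhds (p l)) →
      (⋂ l ∈ I, fanRise (φ l) (p l) (t l)).Infinite) :
    (fanRise (Ψ ∘ Pi.map φ) p U).Nonempty := by
  rw [nhds_pi, mem_pi'] at hU
  obtain ⟨I, t, ht, htU⟩ := hU
  obtain ⟨n, hn, hΨn⟩ :=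
    ((Nat.frequently_atTop_iff_infinite.2 (hinf I t ht)).and_eventually (hΨ I)).exists
  have hthreshold : ∀ l ∈ I, ∃ m, φ l ⁻¹' fan (φ l (p l)) n m ⊆ t l := mem_iInter₂.1 hn
  choose! m hm using hthreshold
  refine ⟨2 * n, I.sup m, fun q hq => htU fun l hl => hm l hl ?_⟩
  exact fan_anti _ _ (Finset.le_sup hl) (hΨn _ _ hq l hl)

end Merging

/-- Theorem 1 of the paper. -/
theorem product_has_piTree_of_infinite_rise_intersections
    {Λ : Type} [Countable Λ] (hΛ : ∃ a b : Λ, a ≠ b)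
    {X : Λ → Type u} [∀ l, TopologicalSpace (X l)]
    (H : ∀ l, FoliageTree (X l)) (hH : ∀ l, (H l).IsPiTree)
    (hrise : ∀ I : Finset Λ, I.Nonempty → ∀ R : Λ → Set ℕ,
      (∀ i ∈ I, R i ∈ (H i).Rise) → (⋂ i ∈ I, R i).Infinite) :
    ∃ G : FoliageTree (∀ l, X l), G.IsPiTree := by
  have : Nonempty Λ := hΛ.nonempty
  choose e φ hφ hφc using fun l => (hH l).1.exists_isChart
  obtain ⟨Ψ, hΨ⟩ := exists_homeomorph_preimage_fan_subset_pi Λ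
  have hchart : (FoliageTree.ofCoords (Ψ ∘ Pi.map φ)).IsChart (RelIso.refl seqLT) (Ψ ∘ Pi.map φ) :=
    FoliageTree.isChart_ofCoords (Ψ.bijective.comp (.piMap fun l => (hφ l).bijective))
  refine ⟨_, hchart.isBaireFoliageTree ?_, hchart.growsInto fun p U hU => ?_⟩
  · exact Ψ.continuous.comp (.piMap hφc)
  · refine fanRise_pi_nonempty hΨ hU fun I t ht => ?_
    obtain rfl | hI := I.eq_empty_or_nonempty
    · simpa using infinite_univ
    · refine hrise I hI _ fun l _ => ⟨p l, t l, ht l, ?_⟩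
      exact ((hφ l).rise_eq_fanRise (mem_of_mem_nhds (ht l))).symm
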